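/- Let n ≥ 1 and k ≥ 1 be integers, let R₁, …, R_{k−1} be nonnegative integers with R₁ + ⋯ + R_{k−1} ≤ n − k, set γ_v = n − v + 1 − Σ_{u=1}^{v−1} R_u for 1 ≤ v ≤ k, and let θ > 0, T > 0 and an integer i with 1 ≤ i ≤ k. Let μ be the measure on ℝ^k whose density with respect to Lebesgue measure is z ↦ 1_{0 < z₁ < ⋯ < z_k, z_k > T} · exp(−(1/θ)(Σ_{s=1}^{k−1} z_s(1 + R_s) + z_k γ_k)), and let g(z) = (Σ_{s=1}^{k−1} z_s(1 + R_s) + z_k γ_k)/i. Then the pushforward measure g_*μ has Lebesgue density x ↦ θ^k Σ_{v=0}^{k−1} [ (−1)^v e^{−(T/θ) γ_{k−v}} / ( (∏_{j=1}^{v} (γ_{k−v} − γ_{k−v+j})) (∏_{j=1}^{k−1−v} (γ_j − γ_{k−v})) · γ_{k−v} ) ] · f_G(x; Tγ_{k−v}/i, k, i/θ). (This is the conditional density of the MLE θ̂₁ = W/D₁ given T < Z_{k:m:n} < Z_{m:m:n} and D₁ = i, up to the common normalizing constant.) -/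

import Mathlib

open MeasureTheory

/-- `γ_v = n − v + 1 − Σ_{u=1}^{v−1} R_u`, the number of surviving units at the time of the
`v`-th failure in a progressive censoring scheme with removals `R 1, R 2, …`. -/
noncomputable def gam (n : ℕ) (R : ℕ → ℕ) (v : ℕ) : ℝ :=
  (n : ℝ) - v + 1 - ∑ u ∈ Finset.Icc 1 (v - 1), (R u : ℝ)

/-- `fG x a b c`: density at `x` of the shifted Gamma distribution with shift `a`,
shape `b` and rate `c`, i.e. `(c^b/Γ(b)) (x − a)^{b−1} e^{−c(x−a)}` for `x > a`. -/
noncomputable def fG (x a b c : ℝ) : ℝ :=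
  if a < x then c ^ b / Real.Gamma b * (x - a) ^ (b - 1) * Real.exp (-c * (x - a)) else 0

section helpers
open ProbabilityTheory

lemma ext_of_laplace (μ ν : Measure ℝ) [IsFiniteMeasure μ] [IsFiniteMeasure ν] (c : ℝ) (hc : 0 < c)
    (h : ∀ u < c, ∫⁻ x, ENNReal.ofReal (Real.exp (u * x)) ∂μ = ∫⁻ x, ENNReal.ofReal (Real.exp (u * x)) ∂ν)
    (hf : ∀ u < c, ∫⁻ x, ENNReal.ofReal (Real.exp (u * x)) ∂μ ≠ ⊤) : μ = ν := by
  have hint : ∀ (ρ : Measure ℝ), (∀ u < c, ∫⁻ x, ENNReal.ofReal (Real.exp (u * x)) ∂ρ ≠ ⊤) →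
      Set.Iio c ⊆ interior (integrableExpSet id ρ) := by
    intro ρ hρ
    apply interior_maximal _ isOpen_Iio
    intro u hu
    refine ⟨by fun_prop, ?_⟩
    rw [hasFiniteIntegral_iff_ofReal (by filter_upwards with x; positivity)]
    exact lt_top_iff_ne_top.2 (hρ u hu)
  have hμ := hint μ hf
  have hν := hint ν (fun u hu => by rw [← h u hu]; exact hf u hu)
  have hmgf : ∀ u < c, mgf id μ u = mgf id ν u := by
    intro u hu
    simp only [mgf, id]
    rw [integral_eq_lintegral_of_nonneg_ae (by filter_upwards with x; positivity) (by fun_prop),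
      integral_eq_lintegral_of_nonneg_ae (by filter_upwards with x; positivity) (by fun_prop), h u hu]
  have hanμ : AnalyticOnNhd ℂ (complexMGF id μ) {z | z.re ∈ Set.Iio c} :=
    analyticOnNhd_complexMGF.mono (fun z hz => hμ hz)
  have hanν : AnalyticOnNhd ℂ (complexMGF id ν) {z | z.re ∈ Set.Iio c} :=
    analyticOnNhd_complexMGF.mono (fun z hz => hν hz)
  have heq : Set.EqOn (complexMGF id μ) (complexMGF id ν) {z | z.re ∈ Set.Iio c} := by
    refine hanμ.eqOn_of_preconnected_of_frequently_eq hanν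
      ((convex_Iio c).linear_preimage Complex.reLm).isPreconnected (z₀ := ((0:ℝ):ℂ)) (by simpa using hc) ?_
    have h_real : ∃ᶠ (x : ℝ) in nhdsWithin 0 {0}ᶜ, complexMGF id μ x = complexMGF id ν x := by
      refine Filter.Eventually.frequently ?_
      filter_upwards [nhdsWithin_le_nhds (Iio_mem_nhds hc)] with y hy
      rw [complexMGF_ofReal, complexMGF_ofReal, hmgf y hy]
    rw [Filter.frequently_iff_seq_forall] at h_real ⊢
    obtain ⟨xs, hx_tendsto, hx_eq⟩ := h_real
    refine ⟨fun n ↦ xs n, ?_, fun n ↦ ?_⟩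
    · rw [tendsto_nhdsWithin_iff] at hx_tendsto ⊢
      constructor
      · rw [Filter.tendsto_ofReal_iff]
        exact hx_tendsto.1
      · simpa using hx_tendsto.2
    · simp [hx_eq]
  apply Measure.ext_of_charFun
  ext t
  have h1 := heq (x := t * Complex.I) (by simpa using hc)
  rw [← complexMGF_id_mul_I, ← complexMGF_id_mul_I]
  simpa using h1

lemma eq_withDensity_of_add (μ : Measure ℝ) [IsFiniteMeasure μ] (p q : ℝ → ℝ)
    (hp : Measurable p) (hq : Measurable q) (hq0 : ∀ x, 0 ≤ q x)
    (hpf : ∫⁻ x, ENNReal.ofReal (p x) ≠ ⊤)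
    (h : μ + volume.withDensity (fun x => ENNReal.ofReal (q x)) = volume.withDensity (fun x => ENNReal.ofReal (p x))) :
    μ = volume.withDensity (fun x => ENNReal.ofReal (p x - q x)) := by
  have hac : μ ≪ volume := by
    refine Measure.AbsolutelyContinuous.trans ?_ (withDensity_absolutelyContinuous volume (fun x => ENNReal.ofReal (p x)))
    rw [← h]
    exact (Measure.le_add_right le_rfl).absolutelyContinuous
  have hrn := Measure.withDensity_rnDeriv_eq μ volume hac
  have h2 : volume.withDensity (fun x => μ.rnDeriv volume x + ENNReal.ofReal (q x)) = volume.withDensity (fun x => ENNReal.ofReal (p x)) := by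
    rw [← h]
    conv_rhs => rw [← hrn]
    rw [← withDensity_add_right _ (by fun_prop)]
    rfl
  have h3 := (withDensity_eq_iff (by fun_prop) (by fun_prop) (by
    rw [← setLIntegral_univ, ← withDensity_apply _ MeasurableSet.univ, h2,
      withDensity_apply _ MeasurableSet.univ, setLIntegral_univ]; exact hpf)).1 h2
  rw [← hrn]
  apply withDensity_congr_ae
  filter_upwards [h3] with x hx
  rw [ENNReal.ofReal_sub _ (hq0 x), ← hx, ENNReal.add_sub_cancel_right ENNReal.ofReal_ne_top]

lemma eq_withDensity_of_laplace {ι : Type*} (s : Finset ι) (μ : Measure ℝ) [IsFiniteMeasure μ]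
    (c : ℝ) (hc : 0 < c) (d : ι → ℝ) (h : ι → ℝ → ℝ) (m : ι → ℝ → ℝ)
    (hm : ∀ j, Measurable (h j)) (h0 : ∀ j x, 0 ≤ h j x) (m0 : ∀ j, ∀ u < c, 0 ≤ m j u)
    (hl : ∀ j, ∀ u < c, ∫⁻ x, ENNReal.ofReal (Real.exp (u * x) * h j x) = ENNReal.ofReal (m j u))
    (hμ0 : ∀ u < c, 0 ≤ ∑ j ∈ s, d j * m j u)
    (hμ : ∀ u < c, ∫⁻ x, ENNReal.ofReal (Real.exp (u * x)) ∂μ = ENNReal.ofReal (∑ j ∈ s, d j * m j u)) :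
    μ = volume.withDensity (fun x => ENNReal.ofReal (∑ j ∈ s, d j * h j x)) := by
  have key : ∀ e : ι → ℝ, (∀ j, 0 ≤ e j) → ∀ u < c,
      ∫⁻ x, ENNReal.ofReal (Real.exp (u * x)) ∂(volume.withDensity (fun x => ENNReal.ofReal (∑ j ∈ s, e j * h j x)))
       = ENNReal.ofReal (∑ j ∈ s, e j * m j u) := by
    intro e he u hu
    rw [lintegral_withDensity_eq_lintegral_mul _ (by fun_prop) (by fun_prop)]
    have : ∀ x, ((fun x => ENNReal.ofReal (∑ j ∈ s, e j * h j x)) * fun x => ENNReal.ofReal (Real.exp (u * x))) x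
        = ∑ j ∈ s, ENNReal.ofReal (e j) * ENNReal.ofReal (Real.exp (u * x) * h j x) := by
      intro x
      simp only [Pi.mul_apply]
      rw [← ENNReal.ofReal_mul' (by positivity), Finset.sum_mul, ENNReal.ofReal_sum_of_nonneg]
      · refine Finset.sum_congr rfl fun j _ => ?_
        rw [← ENNReal.ofReal_mul (he j)]; congr 1; ring
      · intro j _; have := he j; have := h0 j x; positivity
    simp_rw [this]
    rw [lintegral_finsetSum _ (by fun_prop), ENNReal.ofReal_sum_of_nonneg (fun j _ => mul_nonneg (he j) (m0 j u hu))]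
    refine Finset.sum_congr rfl fun j _ => ?_
    rw [lintegral_const_mul _ (by fun_prop), hl j u hu, ENNReal.ofReal_mul (he j)]
  have keyfin : ∀ e : ι → ℝ, (∀ j, 0 ≤ e j) → ∫⁻ x, ENNReal.ofReal (∑ j ∈ s, e j * h j x) ≠ ⊤ := by
    intro e he
    have := key e he 0 hc
    simp only [zero_mul, Real.exp_zero, ENNReal.ofReal_one, lintegral_const, one_mul] at this
    rw [withDensity_apply _ MeasurableSet.univ, setLIntegral_univ] at this
    rw [this]; exact ENNReal.ofReal_ne_top
  have hdp : ∀ j, 0 ≤ max (d j) 0 := fun j => le_max_right _ _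
  have hdn : ∀ j, 0 ≤ max (-d j) 0 := fun j => le_max_right _ _
  have hpm : ∀ r : ℝ, max r 0 - max (-r) 0 = r := fun r => by
    rcases le_total r 0 with h | h
    · rw [max_eq_right h, max_eq_left (by linarith)]; ring
    · rw [max_eq_left h, max_eq_right (by linarith)]; ring
  have hfin : ∀ e : ι → ℝ, (∀ j, 0 ≤ e j) → IsFiniteMeasure (volume.withDensity (fun x => ENNReal.ofReal (∑ j ∈ s, e j * h j x))) :=
    fun e he => isFiniteMeasure_withDensity (keyfin e he)
  have := hfin _ hdp
  have := hfin _ hdn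
  have hmain := eq_withDensity_of_add μ (fun x => ∑ j ∈ s, max (d j) 0 * h j x) (fun x => ∑ j ∈ s, max (- d j) 0 * h j x)
    (by fun_prop) (by fun_prop) (fun x => Finset.sum_nonneg fun j _ => mul_nonneg (hdn j) (h0 j x)) (keyfin _ hdp) (by
      have hE : ∀ u < c, ∫⁻ x, ENNReal.ofReal (Real.exp (u * x)) ∂(μ + volume.withDensity (fun x => ENNReal.ofReal (∑ j ∈ s, max (- d j) 0 * h j x)))
          = ENNReal.ofReal (∑ j ∈ s, max (d j) 0 * m j u) := by
        intro u hu
        rw [lintegral_add_measure, hμ u hu, key _ hdn u hu, ← ENNReal.ofReal_add (hμ0 u hu) (Finset.sum_nonneg fun j _ => mul_nonneg (hdn j) (m0 j u hu)),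
          ← Finset.sum_add_distrib]
        congr 1
        refine Finset.sum_congr rfl fun j _ => ?_
        linear_combination (-m j u) * hpm (d j)
      refine ext_of_laplace _ _ c hc (fun u hu => ?_) (fun u hu => ?_)
      · rw [hE u hu, key _ hdp u hu]
      · rw [hE u hu]; exact ENNReal.ofReal_ne_top)
  rw [hmain]
  congr 1; ext x; congr 1
  rw [← Finset.sum_sub_distrib]
  refine Finset.sum_congr rfl fun j _ => ?_
  linear_combination (h j x) * hpm (d j)

lemma fG_nonneg (x a b c : ℝ) (hb : 0 < b) (hc : 0 < c) : 0 ≤ fG x a b c := by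
  unfold fG
  split_ifs with h
  · have : 0 < x - a := by linarith
    have := Real.Gamma_pos_of_pos hb
    positivity
  · exact le_rfl

lemma fG_measurable (a b c : ℝ) : Measurable (fun x => fG x a b c) := by
  unfold fG
  refine Measurable.ite measurableSet_Ioi (by fun_prop) (by fun_prop)

lemma lintegral_fG (a b c : ℝ) (hb : 0 < b) (hc : 0 < c) :
    ∫⁻ x, ENNReal.ofReal (fG x a b c) = 1 := by
  rw [← lintegral_gammaPDF_eq_one hb hc, ← lintegral_sub_right_eq_self (gammaPDF b c) a]
  apply lintegral_congr_ae
  have : ∀ᵐ x : ℝ, x ≠ a := by simp [ae_iff]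
  filter_upwards [this] with x hx
  rw [gammaPDF, gammaPDFReal, fG]
  by_cases h : a < x
  · rw [if_pos h, if_pos (by linarith)]; ring_nf
  · have : x < a := lt_of_le_of_ne (not_lt.1 h) hx
    rw [if_neg h, if_neg (by linarith)]

lemma laplace_fG (a : ℝ) (k : ℕ) (c u : ℝ) (hk : 0 < k) (hc : 0 < c) (hu : u < c) :
    ∫⁻ x, ENNReal.ofReal (Real.exp (u * x) * fG x a k c) = ENNReal.ofReal (Real.exp (u * a) * (c / (c - u)) ^ k) := by
  have hcu : 0 < c - u := by linarith
  have : ∀ x, Real.exp (u * x) * fG x a k c = (Real.exp (u * a) * (c / (c - u)) ^ k) * fG x a k (c - u) := by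
    intro x
    unfold fG
    split_ifs
    · rw [Real.rpow_natCast, Real.rpow_natCast, div_pow]
      have : Real.exp (u * x) * Real.exp (-c * (x - a)) = Real.exp (u * a) * Real.exp (-(c-u) * (x - a)) := by
        rw [← Real.exp_add, ← Real.exp_add]; ring_nf
      have h2 : (c - u) ^ k ≠ 0 := by positivity
      revert this
      generalize Real.exp (u * x) = e1
      generalize Real.exp (-c * (x - a)) = e2
      generalize Real.exp (u * a) = e3
      generalize Real.exp (-(c - u) * (x - a)) = e4
      generalize (x - a) ^ ((k:ℝ) - 1) = e5
      intro this
      field_simp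
      linear_combination e5 * this
    · simp
  simp_rw [this]
  have h1 : 0 ≤ Real.exp (u * a) * (c / (c - u)) ^ k := by positivity
  simp_rw [ENNReal.ofReal_mul h1]
  have := fG_measurable a k (c - u)
  rw [lintegral_const_mul _ (by fun_prop), lintegral_fG _ _ _ (by exact_mod_cast hk) hcu, mul_one]

end helpers

section helpers2

/-- coefficients -/
noncomputable def coefC (k : ℕ) (g : ℕ → ℝ) (l : ℕ) : ℝ :=
  (g l)⁻¹ * ∏ j ∈ Finset.range k, if j = l then 1 else (g j - g l)⁻¹

lemma coefC_succ (k : ℕ) (g : ℕ → ℝ) (l : ℕ) :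
    coefC (k+1) g (l+1) = coefC k (fun s => g (s+1)) l * (g 0 - g (l+1))⁻¹ := by
  simp only [coefC, Finset.prod_range_succ', Nat.add_right_cancel_iff]
  simp; ring

lemma partial_frac (k : ℕ) (hk : 0 < k) (g : ℕ → ℝ) (x : ℝ) (hg : Set.InjOn g (Finset.range k))
    (hx : ∀ j ∈ Finset.range k, x ≠ g j) :
    ∑ l ∈ Finset.range k, (∏ j ∈ Finset.range k, if j = l then 1 else (g j - g l)⁻¹) * (g l - x)⁻¹
      = ∏ j ∈ Finset.range k, (g j - x)⁻¹ := by
  have h1 := Lagrange.eval_interpolate_not_at_node (s := Finset.range k) (v := g) 1 hx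
  rw [Lagrange.interpolate_one hg ⟨0, by simpa using hk⟩] at h1
  simp only [Polynomial.eval_one, Lagrange.eval_nodal, Pi.one_apply, mul_one] at h1
  have hne : ∏ j ∈ Finset.range k, (x - g j) ≠ 0 := Finset.prod_ne_zero_iff.2 fun j hj => sub_ne_zero.2 (hx j hj)
  have h2 : ∏ j ∈ Finset.range k, (g j - x)⁻¹ = (-1)^k * (∏ j ∈ Finset.range k, (x - g j))⁻¹ := by
    rw [← Finset.prod_inv_distrib, ← Finset.card_range k, ← Finset.prod_const, Finset.card_range, ← Finset.prod_mul_distrib]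
    refine Finset.prod_congr rfl fun j _ => ?_
    rw [← neg_sub x, inv_neg]; ring
  rw [h2, ← eq_inv_of_mul_eq_one_right h1.symm, Finset.mul_sum]
  refine Finset.sum_congr rfl fun l hl => ?_
  rw [Lagrange.nodalWeight, ← Finset.mul_prod_erase _ _ hl, if_pos rfl, one_mul]
  have h3 : ∏ j ∈ (Finset.range k).erase l, (if j = l then 1 else (g j - g l)⁻¹)
      = (-1)^(k-1) * ∏ j ∈ (Finset.range k).erase l, (g l - g j)⁻¹ := by
    have : k - 1 = ((Finset.range k).erase l).card := by simp [Finset.card_erase_of_mem hl]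
    rw [this, ← Finset.prod_const, ← Finset.prod_mul_distrib]
    refine Finset.prod_congr rfl fun j hj => ?_
    rw [if_neg (Finset.ne_of_mem_erase hj), ← neg_sub (g l), inv_neg]; ring
  rw [h3, ← neg_sub x, inv_neg]
  obtain ⟨m, rfl⟩ : ∃ m, k = m + 1 := ⟨k-1, by omega⟩
  simp only [Nat.add_sub_cancel, pow_succ]
  ring

lemma coefC_zero (k : ℕ) (hk : 0 < k) (g : ℕ → ℝ) (hg : ∀ s t, s < t → t ≤ k → g t < g s)
    (hpos : ∀ s ≤ k, 0 < g s) :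
    coefC (k+1) g 0 = ∑ l ∈ Finset.range k,
      coefC k (fun s => g (s+1)) l * ((g 0)⁻¹ - (g 0 - g (l+1))⁻¹) := by
  have h := partial_frac k hk (fun s => g (s+1)) (g 0) (by
    intro a ha b hb hab
    simp only [Finset.coe_range, Set.mem_Iio] at ha hb
    rcases lt_trichotomy a b with h | h | h
    · exact absurd hab (hg (a+1) (b+1) (by omega) (by omega)).ne'
    · exact h
    · exact absurd hab (hg (b+1) (a+1) (by omega) (by omega)).ne) (by
    intro j hj
    simp only [Finset.mem_range] at hj
    exact (hg 0 (j+1) (by omega) (by omega)).ne')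
  rw [coefC, Finset.prod_range_succ']
  simp only [Nat.add_eq_zero_iff, one_ne_zero, and_false, if_false, if_true, mul_one]
  rw [← h, Finset.mul_sum]
  refine Finset.sum_congr rfl fun l hl => ?_
  simp only [Finset.mem_range] at hl
  rw [coefC]
  have h1 := hpos 0 (by omega)
  have h2 := hpos (l+1) (by omega)
  have h3 := sub_pos.2 (hg 0 (l+1) (by omega) (by omega))
  rw [← neg_sub (g 0)]
  field_simp
  ring

lemma integral_piece (a G b T t : ℝ) (ha : 0 < a) (hG : 0 < G) (hb : 0 < b) (hbG : b < G) :
    IntegrableOn (fun z => Real.exp (-a * G * z) * Real.exp (-a * max (T - z) 0 * b)) (Set.Ioi t) ∧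
    ∫ z in Set.Ioi t, Real.exp (-a * G * z) * Real.exp (-a * max (T - z) 0 * b)
      = Real.exp (-a * G * t) * a⁻¹ * ((G - b)⁻¹ * Real.exp (-a * max (T - t) 0 * b)
        + (G⁻¹ - (G - b)⁻¹) * Real.exp (-a * max (T - t) 0 * G)) := by
  have hint : ∀ t, IntegrableOn (fun z => Real.exp (-a * G * z) * Real.exp (-a * max (T - z) 0 * b)) (Set.Ioi t) := by
    intro t
    have h1 : IntegrableOn (fun z => Real.exp (-a * G * z)) (Set.Ioi t) :=
      integrableOn_exp_mul_Ioi (by nlinarith [mul_pos ha hG]) t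
    refine Integrable.mono' h1 (by fun_prop) ?_
    filter_upwards with z
    rw [Real.norm_eq_abs, abs_of_nonneg (by positivity)]
    refine mul_le_of_le_one_right (by positivity) ?_
    rw [Real.exp_le_one_iff]
    have : 0 ≤ a * max (T - z) 0 * b := by positivity
    linarith
  refine ⟨hint t, ?_⟩
  have hbig : ∀ t, T ≤ t → ∫ z in Set.Ioi t, Real.exp (-a * G * z) * Real.exp (-a * max (T - z) 0 * b)
      = Real.exp (-a * G * t) * a⁻¹ * G⁻¹ := by
    intro t ht
    rw [setIntegral_congr_fun (g := fun z => Real.exp (-a * G * z)) measurableSet_Ioi]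
    · rw [integral_exp_mul_Ioi (by nlinarith [mul_pos ha hG])]
      field_simp
    · intro z hz
      simp only [Set.mem_Ioi] at hz
      simp [max_eq_right (show T - z ≤ 0 by linarith)]
  rcases le_or_gt T t with h | h
  · rw [hbig t h, max_eq_right (by linarith)]
    simp
  · rw [← Set.Ioc_union_Ioi_eq_Ioi h.le, setIntegral_union (Set.Ioc_disjoint_Ioi le_rfl) measurableSet_Ioi
      ((hint t).mono_set Set.Ioc_subset_Ioi_self) (hint T), hbig T le_rfl,
      ← intervalIntegral.integral_of_le h.le, max_eq_left (by linarith)]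
    have hne : G - b ≠ 0 := by linarith [sub_pos.2 hbG]
    rw [intervalIntegral.integral_eq_sub_of_hasDerivAt
      (f := fun z => -(a * (G - b))⁻¹ * Real.exp (-a * T * b + (-a * (G - b)) * z))]
    · have e1 : Real.exp (-a * G * t) * Real.exp (-a * (T - t) * b) = Real.exp (-a * T * b + (-a * (G - b)) * t) := by
        rw [← Real.exp_add]; ring_nf
      have e2 : Real.exp (-a * G * t) * Real.exp (-a * (T - t) * G) = Real.exp (-a * G * T) := by
        rw [← Real.exp_add]; ring_nf
      have e3 : Real.exp (-a * T * b + (-a * (G - b)) * T) = Real.exp (-a * G * T) := by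
        ring_nf
      have : Real.exp (-a * G * t) * a⁻¹ * ((G - b)⁻¹ * Real.exp (-a * (T - t) * b)
        + (G⁻¹ - (G - b)⁻¹) * Real.exp (-a * (T - t) * G)) =
         a⁻¹ * ((G - b)⁻¹ * Real.exp (-a * T * b + (-a * (G - b)) * t)
        + (G⁻¹ - (G - b)⁻¹) * Real.exp (-a * G * T)) := by rw [← e1, ← e2]; ring
      rw [this, e3, mul_inv]; ring
    · intro z hz
      rw [Set.uIcc_of_le h.le] at hz
      have : Real.exp (-a * G * z) * Real.exp (-a * max (T - z) 0 * b) = Real.exp (-a * T * b + (-a * (G - b)) * z) := by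
        rw [max_eq_left (by linarith [hz.2]), ← Real.exp_add]; ring_nf
      rw [this]
      have hd := ((((hasDerivAt_id z).const_mul (-a * (G - b))).const_add (-a * T * b)).exp).const_mul (-(a * (G - b))⁻¹)
      refine hd.congr_deriv ?_
      show -(a * (G - b))⁻¹ * (Real.exp (-a * T * b + (-a * (G - b)) * z) * (-a * (G - b) * 1)) = _
      field_simp
    · apply Continuous.intervalIntegrable; fun_prop

/-- ordered region -/
def ordS (K : ℕ) (t T : ℝ) : Set (Fin (K+1) → ℝ) :=
  {z | StrictMono z ∧ (∀ h, t < z h) ∧ T < z (Fin.last K)}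

lemma ordS_meas (K : ℕ) (t T : ℝ) : MeasurableSet (ordS K t T) := by
  have : ordS K t T = (⋂ i, ⋂ j, ⋂ (_ : i < j), {z | z i < z j}) ∩ ((⋂ h, {z | t < z h}) ∩ {z | T < z (Fin.last K)}) := by
    ext z; simp [ordS, StrictMono]
  rw [this]
  refine MeasurableSet.inter ?_ (MeasurableSet.inter ?_ ?_)
  · refine MeasurableSet.iInter fun i => MeasurableSet.iInter fun j => MeasurableSet.iInter fun _ => ?_
    exact measurableSet_lt (by fun_prop) (by fun_prop)
  · exact MeasurableSet.iInter fun i => measurableSet_lt (by fun_prop) (by fun_prop)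
  · exact measurableSet_lt (by fun_prop) (by fun_prop)

lemma cons_mem_ordS (K : ℕ) (t T x : ℝ) (y : Fin (K+1) → ℝ) :
    (Fin.cons x y : Fin (K+2) → ℝ) ∈ ordS (K+1) t T ↔ t < x ∧ y ∈ ordS K x T := by
  simp only [ordS, Set.mem_ofPred_eq]
  rw [← Fin.succ_last, Fin.cons_succ]
  constructor
  · rintro ⟨h1, h2, h3⟩
    refine ⟨by simpa using h2 0, fun i j hij => ?_, fun h => ?_, h3⟩
    · simpa using h1 (Fin.succ_lt_succ_iff.2 hij)
    · simpa using h1 (Fin.succ_pos h)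
  · rintro ⟨h0, h1, h2, h3⟩
    refine ⟨fun i j hij => ?_, fun h => ?_, h3⟩
    · induction i using Fin.cases with
      | zero =>
        induction j using Fin.cases with
        | zero => exact absurd hij (lt_irrefl _)
        | succ j => simpa using h2 j
      | succ i =>
        induction j using Fin.cases with
        | zero => exact absurd hij (by simp)
        | succ j => simpa using h1 (Fin.succ_lt_succ_iff.1 hij)
    · induction h using Fin.cases with
      | zero => simpa using h0
      | succ j => simpa using h0.trans (h2 j)

noncomputable def lapF (K : ℕ) (g : ℕ → ℝ) (a t T : ℝ) : ℝ :=
  (a⁻¹)^(K+1) * Real.exp (-a * g 0 * t) * ∑ l ∈ Finset.range (K+1), coefC (K+1) g l * Real.exp (-a * max (T - t) 0 * g l)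

/-- linear form -/
def linS (K : ℕ) (g : ℕ → ℝ) (z : Fin (K+1) → ℝ) : ℝ := ∑ s : Fin (K+1), z s * (g s - g (s+1))

lemma lapF_rec (K : ℕ) (g : ℕ → ℝ) (a t T : ℝ) (ha : 0 < a) (hg : ∀ s t, s < t → t ≤ K+1 → g t < g s)
    (hpos : ∀ s ≤ K+1, 0 < g s) :
    IntegrableOn (fun z => Real.exp (-a * (z * (g 0 - g 1))) * lapF K (fun s => g (s+1)) a z T) (Set.Ioi t) ∧
    ∫ z in Set.Ioi t, Real.exp (-a * (z * (g 0 - g 1))) * lapF K (fun s => g (s+1)) a z T = lapF (K+1) g a t T := by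
  have hrew : (fun z => Real.exp (-a * (z * (g 0 - g 1))) * lapF K (fun s => g (s+1)) a z T)
     = fun z => ∑ l ∈ Finset.range (K+1), ((a⁻¹)^(K+1) * coefC (K+1) (fun s => g (s+1)) l) *
        (Real.exp (-a * g 0 * z) * Real.exp (-a * max (T - z) 0 * g (l+1))) := by
    ext z
    have e1 : Real.exp (-a * g 0 * z) = Real.exp (-a * (z * (g 0 - g 1))) * Real.exp (-a * g (0+1) * z) := by
      rw [← Real.exp_add]; ring_nf
    rw [lapF, Finset.mul_sum, Finset.mul_sum, e1]
    exact Finset.sum_congr rfl fun l _ => by ring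
  have hp : ∀ l ∈ Finset.range (K+1), _ := fun l hl =>
    integral_piece a (g 0) (g (l+1)) T t ha (hpos 0 (by omega)) (hpos (l+1) (by simp at hl; omega))
      (hg 0 (l+1) (by omega) (by simp at hl; omega))
  rw [hrew]
  refine ⟨integrable_finsetSum _ fun l hl => (hp l hl).1.const_mul _, ?_⟩
  rw [integral_finsetSum _ fun l hl => (hp l hl).1.const_mul _]
  simp_rw [integral_const_mul]
  rw [Finset.sum_congr rfl fun l hl => by rw [(hp l hl).2], lapF, Finset.sum_range_succ' _ (K+1),
    coefC_zero (K+1) (by omega) g hg hpos, Finset.sum_mul, ← Finset.sum_add_distrib, Finset.mul_sum]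
  refine Finset.sum_congr rfl fun l _ => ?_
  rw [coefC_succ]
  ring

lemma laplace_ord (K : ℕ) : ∀ (g : ℕ → ℝ) (a t T : ℝ), 0 < a → (∀ s t, s < t → t ≤ K → g t < g s) →
    (∀ s ≤ K, 0 < g s) → g (K+1) = 0 →
    0 ≤ lapF K g a t T ∧
    ∫⁻ z in ordS K t T, ENNReal.ofReal (Real.exp (-a * linS K g z)) = ENNReal.ofReal (lapF K g a t T) := by
  induction K with
  | zero =>
    intro g a t T ha hg hpos h0
    have hg0 := hpos 0 le_rfl
    have hF : lapF 0 g a t T = ∫ x in Set.Ioi (max t T), Real.exp (-a * g 0 * x) := by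
      rw [integral_exp_mul_Ioi (by nlinarith [mul_pos ha hg0])]
      simp only [lapF, coefC]
      have : Real.exp (-a * g 0 * max t T) = Real.exp (-a * g 0 * t) * Real.exp (-a * max (T - t) 0 * g 0) := by
        rw [← Real.exp_add]
        have : max t T = t + max (T - t) 0 := by rw [← max_add_add_left, add_zero, max_comm]; ring_nf
        rw [this]; ring_nf
      rw [this]
      simp
      field_simp
    refine ⟨?_, ?_⟩
    · rw [hF]; exact integral_nonneg fun x => by positivity
    · rw [hF, ofReal_integral_eq_lintegral_ofReal (integrableOn_exp_mul_Ioi (by nlinarith [mul_pos ha hg0]) _)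
        (by filter_upwards with x; positivity)]
      rw [← (volume_preserving_funUnique (Fin 1) ℝ).setLIntegral_comp_preimage measurableSet_Ioi (by fun_prop)]
      have : (MeasurableEquiv.funUnique (Fin 1) ℝ) ⁻¹' Set.Ioi (max t T) = ordS 0 t T := by
        ext z
        simp [ordS, Subsingleton.strictMono]
      rw [this]
      refine lintegral_congr fun z => ?_
      simp [linS, h0]
      ring_nf
  | succ K ih =>
    intro g a t T ha hg hpos h0
    have ih' := fun x => ih (fun s => g (s+1)) a x T ha (fun s t hst ht => hg _ _ (by omega) (by omega))
      (fun s hs => hpos _ (by omega)) h0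
    obtain ⟨hi, hI⟩ := lapF_rec K g a t T ha hg hpos
    have hnn : ∀ z, 0 ≤ Real.exp (-a * (z * (g 0 - g 1))) * lapF K (fun s => g (s+1)) a z T :=
      fun z => mul_nonneg (by positivity) (ih' z).1
    refine ⟨by rw [← hI]; exact integral_nonneg hnn, ?_⟩
    rw [← hI, ofReal_integral_eq_lintegral_ofReal hi (by filter_upwards with x; exact hnn x)]
    have hmeas : Measurable (fun z : Fin (K+2) → ℝ => ENNReal.ofReal (Real.exp (-a * linS (K+1) g z))) := by
      unfold linS; fun_prop
    rw [← lintegral_indicator (ordS_meas _ _ _)]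
    have hm2 := hmeas.indicator (ordS_meas (K+1) t T)
    rw [← (volume_preserving_piFinSuccAbove (fun _ : Fin (K+2) => ℝ) 0).symm.lintegral_comp hm2]
    have hm3 := hm2.comp (MeasurableEquiv.piFinSuccAbove (fun _ : Fin (K+2) => ℝ) 0).symm.measurable
    refine (lintegral_prod _ hm3.aemeasurable).trans ?_
    rw [← lintegral_indicator measurableSet_Ioi]
    refine lintegral_congr fun x => ?_
    have hc : ∀ y : Fin (K+1) → ℝ, (MeasurableEquiv.piFinSuccAbove (fun _ : Fin (K+2) => ℝ) 0).symm (x, y) = Fin.cons x y := by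
      intro y
      simp [MeasurableEquiv.piFinSuccAbove, Fin.insertNthEquiv]
    simp only [Function.comp, hc]
    by_cases hx : t < x
    · rw [Set.indicator_of_mem (by exact hx), ENNReal.ofReal_mul (by positivity), ← (ih' x).2,
        ← lintegral_const_mul _ (by unfold linS; fun_prop), ← lintegral_indicator (ordS_meas _ _ _)]
      refine lintegral_congr fun y => ?_
      by_cases hy : y ∈ ordS K x T
      · rw [Set.indicator_of_mem ((cons_mem_ordS ..).2 ⟨hx, hy⟩), Set.indicator_of_mem hy,
          ← ENNReal.ofReal_mul (by positivity), ← Real.exp_add]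
        congr 2
        rw [linS, Fin.sum_univ_succ, linS]
        simp
        ring
      · rw [Set.indicator_of_notMem (fun h => hy ((cons_mem_ordS ..).1 h).2), Set.indicator_of_notMem hy]
    · rw [Set.indicator_of_notMem (by exact hx)]
      simp only [cons_mem_ordS, Set.indicator, hx, false_and, if_false, lintegral_zero]

end helpers2

section helpers3

lemma prod_Icc_one (f : ℕ → ℝ) (v : ℕ) : ∏ j ∈ Finset.Icc 1 v, f j = ∏ j ∈ Finset.range v, f (j+1) := by
  induction v with
  | zero => simp
  | succ v ih => rw [Finset.prod_Icc_succ_top (by omega), ih, Finset.prod_range_succ]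

lemma coefC_eq (g q : ℕ → ℝ) (l v : ℕ) (h : ∀ s ≤ l + v, g s = q (s+1)) :
    (-1 : ℝ)^v / ((∏ j ∈ Finset.Icc 1 v, (q (l+1) - q (l+1+j))) *
      (∏ j ∈ Finset.Icc 1 l, (q j - q (l+1))) * q (l+1)) = coefC (l+1+v) g l := by
  rw [prod_Icc_one, prod_Icc_one, coefC, Finset.prod_range_add, Finset.prod_range_succ, if_pos rfl, mul_one]
  have h1 : ∏ j ∈ Finset.range l, (if j = l then 1 else (g j - g l)⁻¹) = (∏ j ∈ Finset.range l, (q (j+1) - q (l+1)))⁻¹ := by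
    rw [← Finset.prod_inv_distrib]
    refine Finset.prod_congr rfl fun j hj => ?_
    simp only [Finset.mem_range] at hj
    rw [if_neg hj.ne, h j (by omega), h l (by omega)]
  have h2 : ∏ j ∈ Finset.range v, (if l + 1 + j = l then 1 else (g (l+1+j) - g l)⁻¹)
      = (-1)^v * (∏ j ∈ Finset.range v, (q (l+1) - q (l+1+(j+1))))⁻¹ := by
    rw [← Finset.prod_inv_distrib]
    have hc : (-1 : ℝ)^v = ∏ _j ∈ Finset.range v, (-1 : ℝ) := by simp
    rw [hc, ← Finset.prod_mul_distrib]
    refine Finset.prod_congr rfl fun j hj => ?_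
    simp only [Finset.mem_range] at hj
    rw [if_neg (by omega), h (l+1+j) (by omega), h l (by omega), ← neg_sub, inv_neg]
    simp [add_assoc]
  rw [h1, h2, h l (by omega), div_eq_mul_inv, mul_inv, mul_inv]
  ring

lemma gam_succ (n : ℕ) (R : ℕ → ℕ) (s : ℕ) : gam n R (s+1) - gam n R (s+2) = 1 + R (s+1) := by
  simp only [gam]
  rw [show s + 2 - 1 = s + 1 by omega, show s + 1 - 1 = s by omega, Finset.sum_Icc_succ_top (by omega)]
  push_cast; ring

lemma gam_anti (n : ℕ) (R : ℕ → ℕ) : StrictAnti (fun s => gam n R (s+1)) := by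
  refine strictAnti_nat_of_succ_lt fun s => ?_
  have := gam_succ n R s
  have h2 : (0:ℝ) ≤ R (s+1) := by positivity
  show gam n R (s+2) < gam n R (s+1)
  linarith

end helpers3

/-- Case `T < Z_{k:m:n} < Z_{m:m:n}`: the pushforward of the (sub-probability) measure with
density `1_{0<z₁<⋯<z_k, z_k>T} exp(−(1/θ)(Σ_{s<k} z_s(1+R_s) + z_k γ_k))` under
`g(z) = (Σ_{s<k} z_s(1+R_s) + z_k γ_k)/i` has Lebesgue density
`x ↦ θ^k Σ_{v=0}^{k−1} (−1)^v e^{−(T/θ)γ_{k−v}} / [⋯ γ_{k−v}] · f_G(x; Tγ_{k−v}/i, k, i/θ)`. -/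
theorem conditional_density_mle_case_Zk (n k : ℕ) (hn : 1 ≤ n) (hk : 1 ≤ k) (R : ℕ → ℕ)
    (hR : (∑ u ∈ Finset.Icc 1 (k - 1), R u) + k ≤ n)
    (θ T : ℝ) (hθ : 0 < θ) (hT : 0 < T)
    (i : ℕ) (hi1 : 1 ≤ i) (hik : i ≤ k) :
    Measure.map
        (fun z : Fin k → ℝ =>
          ((∑ h : Fin (k - 1),
              z ⟨h.1, lt_of_lt_of_le h.2 (Nat.sub_le k 1)⟩ * (1 + (R (h.1 + 1) : ℝ))) +
            z ⟨k - 1, Nat.sub_lt (by omega) Nat.one_pos⟩ * gam n R k) / i)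
        (volume.withDensity fun z : Fin k → ℝ =>
          ENNReal.ofReal
            (Set.indicator
              {z : Fin k → ℝ | StrictMono z ∧ (∀ h, 0 < z h) ∧
                T < z ⟨k - 1, Nat.sub_lt (by omega) Nat.one_pos⟩}
              (fun z => Real.exp
                (-(1 / θ) * ((∑ h : Fin (k - 1),
                    z ⟨h.1, lt_of_lt_of_le h.2 (Nat.sub_le k 1)⟩ * (1 + (R (h.1 + 1) : ℝ))) +
                  z ⟨k - 1, Nat.sub_lt (by omega) Nat.one_pos⟩ * gam n R k))) z)) =
      volume.withDensity fun x =>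
        ENNReal.ofReal
          (θ ^ k * ∑ v ∈ Finset.range k,
            (-1 : ℝ) ^ v * Real.exp (-(T / θ) * gam n R (k - v)) /
                ((∏ j ∈ Finset.Icc 1 v, (gam n R (k - v) - gam n R (k - v + j))) *
                  (∏ j ∈ Finset.Icc 1 (k - 1 - v), (gam n R j - gam n R (k - v))) *
                  gam n R (k - v)) *
              fG x (T * gam n R (k - v) / i) k (i / θ)) := by
  obtain ⟨K, rfl⟩ : ∃ K, k = K + 1 := ⟨k - 1, by omega⟩
  set g : ℕ → ℝ := fun s => if s ≤ K then gam n R (s+1) else 0 with hgdef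
  have hgs : ∀ s ≤ K, g s = gam n R (s+1) := fun s hs => by simp [hgdef, hs]
  have hgK : g (K+1) = 0 := by simp [hgdef]
  have hi : (0:ℝ) < i := by exact_mod_cast hi1
  have hlast : 0 < gam n R (K+1) := by
    have : ((∑ u ∈ Finset.Icc 1 K, (R u : ℝ)) + (K+1 : ℕ) : ℝ) ≤ n := by exact_mod_cast hR
    simp only [gam, Nat.add_sub_cancel]
    linarith
  have hanti : ∀ s t, s < t → t ≤ K → g t < g s := fun s t hst ht => by
    rw [hgs s (by omega), hgs t ht]; exact gam_anti n R hst
  have hpos : ∀ s ≤ K, 0 < g s := fun s hs => by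
    rw [hgs s hs]; exact hlast.trans_le ((gam_anti n R).antitone hs)
  have hlin : ∀ z : Fin (K+1) → ℝ, (∑ h : Fin (K + 1 - 1),
              z ⟨h.1, lt_of_lt_of_le h.2 (Nat.sub_le (K+1) 1)⟩ * (1 + (R (h.1 + 1) : ℝ))) +
            z ⟨K + 1 - 1, Nat.sub_lt (by omega) Nat.one_pos⟩ * gam n R (K+1) = linS K g z := by
    intro z
    rw [linS, Fin.sum_univ_castSucc]
    congr 1
    · refine Finset.sum_congr rfl fun h _ => ?_
      have h2 : (h : ℕ) < K := h.2
      rw [Fin.val_castSucc, hgs h (by omega), hgs (h+1) (by omega), gam_succ]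
      rfl
    · rw [Fin.val_last, hgK, hgs K le_rfl, sub_zero]
      rfl
  simp_rw [hlin]
  have hset : {z : Fin (K+1) → ℝ | StrictMono z ∧ (∀ h, 0 < z h) ∧
                T < z ⟨K + 1 - 1, Nat.sub_lt (by omega) Nat.one_pos⟩} = ordS K 0 T := rfl
  rw [hset]
  have hlm : Measurable (linS K g) := by unfold linS; fun_prop
  set c : ℝ := i / θ with hc
  have hcpos : 0 < c := by positivity
  set μ := Measure.map (fun z => linS K g z / i) (volume.withDensity fun z : Fin (K+1) → ℝ =>
    ENNReal.ofReal ((ordS K 0 T).indicator (fun z => Real.exp (-(1/θ) * linS K g z)) z)) with hμ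
  have hapos : ∀ u < c, 0 < 1 / θ - u / i := by
    intro u hu
    rw [hc] at hu
    rw [sub_pos, div_lt_div_iff₀ hi hθ]
    rw [lt_div_iff₀ hθ] at hu
    linarith
  have hL : ∀ u < c, ∫⁻ x, ENNReal.ofReal (Real.exp (u * x)) ∂μ = ENNReal.ofReal (lapF K g (1 / θ - u / i) 0 T) := by
    intro u hu
    have hind : Measurable fun z : Fin (K+1) → ℝ => ENNReal.ofReal ((ordS K 0 T).indicator (fun z => Real.exp (-(1/θ) * linS K g z)) z) :=
      ((Measurable.indicator (by fun_prop) (ordS_meas K 0 T))).ennreal_ofReal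
    rw [hμ, lintegral_map (by fun_prop) (by fun_prop), lintegral_withDensity_eq_lintegral_mul _ hind (by fun_prop),
      ← (laplace_ord K g _ 0 T (hapos u hu) hanti hpos hgK).2, ← lintegral_indicator (ordS_meas K 0 T)]
    refine lintegral_congr fun z => ?_
    by_cases hz : z ∈ ordS K 0 T
    · simp only [Pi.mul_apply, Set.indicator_of_mem hz]
      rw [← ENNReal.ofReal_mul (by positivity), ← Real.exp_add]
      congr 2
      ring
    · simp [Set.indicator_of_notMem hz]
  have hfin : IsFiniteMeasure μ := by
    constructor
    have := hL 0 hcpos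
    simp only [zero_mul, Real.exp_zero, ENNReal.ofReal_one, lintegral_const, one_mul] at this
    rw [this]; exact ENNReal.ofReal_lt_top
  have hcoef : ∀ v ∈ Finset.range (K+1), (-1 : ℝ) ^ v * Real.exp (-(T / θ) * gam n R (K + 1 - v)) /
                ((∏ j ∈ Finset.Icc 1 v, (gam n R (K + 1 - v) - gam n R (K + 1 - v + j))) *
                  (∏ j ∈ Finset.Icc 1 (K + 1 - 1 - v), (gam n R j - gam n R (K + 1 - v))) *
                  gam n R (K + 1 - v)) = coefC (K+1) g (K - v) * Real.exp (-(T / θ) * g (K - v)) := by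
    intro v hv
    simp only [Finset.mem_range] at hv
    have h1 := coefC_eq g (gam n R) (K - v) v (fun s hs => hgs s (by omega))
    rw [show K - v + 1 + v = K + 1 by omega, show K - v + 1 = K + 1 - v by omega] at h1
    rw [hgs (K - v) (by omega), ← h1, show K + 1 - 1 - v = K - v by omega, show K - v + 1 = K + 1 - v by omega]
    ring
  have hsum : ∀ u < c, ∑ v ∈ Finset.range (K+1), (θ ^ (K+1) * (coefC (K+1) g (K - v) * Real.exp (-(T / θ) * g (K - v)))) *
      (Real.exp (u * (T * gam n R (K + 1 - v) / i)) * (c / (c - u)) ^ (K+1)) = lapF K g (1 / θ - u / i) 0 T := by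
    intro u hu
    rw [lapF, ← Finset.sum_range_reflect, Finset.mul_sum]
    refine Finset.sum_congr rfl fun v hv => ?_
    simp only [Finset.mem_range] at hv
    rw [show K + 1 - 1 - v = K - v by omega, sub_zero, max_eq_left hT.le, mul_zero, Real.exp_zero, mul_one,
      show K + 1 - (K - v) = v + 1 by omega, show K - (K - v) = v by omega, ← hgs v (by omega)]
    have e1 : Real.exp (-(1 / θ - u / i) * T * g v) = Real.exp (-(T / θ) * g v) * Real.exp (u * (T * g v / i)) := by
      rw [← Real.exp_add]; congr 1; ring
    have ha := hapos u hu
    have e2 : (1 / θ - u / i)⁻¹ = θ * (c / (c - u)) := by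
      have : c - u = i * (1 / θ - u / i) := by rw [hc]; field_simp
      rw [this, hc]; field_simp
    rw [e1, e2, mul_pow]
    ring
  have hres := eq_withDensity_of_laplace (Finset.range (K+1)) μ c hcpos
    (fun v => θ ^ (K+1) * (coefC (K+1) g (K - v) * Real.exp (-(T / θ) * g (K - v))))
    (fun v x => fG x (T * gam n R (K + 1 - v) / i) (K + 1 : ℕ) c)
    (fun v u => Real.exp (u * (T * gam n R (K + 1 - v) / i)) * (c / (c - u)) ^ (K+1))
    (fun v => fG_measurable _ _ _) (fun v x => fG_nonneg _ _ _ _ (by positivity) hcpos)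
    (fun v u hu => by have := sub_pos.2 hu; positivity)
    (fun v u hu => laplace_fG _ _ _ _ (by omega) hcpos hu)
    (fun u hu => by rw [hsum u hu]; exact (laplace_ord K g _ 0 T (hapos u hu) hanti hpos hgK).1)
    (fun u hu => by rw [hsum u hu]; exact hL u hu)
  rw [hres]
  congr 1
  ext x
  congr 1
  rw [Finset.mul_sum]
  refine Finset.sum_congr rfl fun v hv => ?_
  rw [hcoef v hv]
  ring
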